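/- Suppose 0 < ε < ε₀, f ∈ 𝔚_{ε₀}, and ∫_u^{+∞} f'''(t)e^{−t/ε}dt ≥ 0 for every u ∈ ℝ. Then for every x = (x₁,x₂) ∈ Ω_ε, B_ε(x; f) = m_L(u)·(x₁ − u) + f(u), where u = u_L(x) = x₁ − ε + √(ε² − (x₂ − x₁²)) and m_L(u) = ε⁻¹e^{u/ε}∫_u^{+∞} f'(t)e^{−t/ε}dt. -/

import Mathlib

open MeasureTheory Set Real

/-- The average of `φ` over the interval with endpoints `a`, `b`. -/
noncomputable def intAvg (φ : ℝ → ℝ) (a b : ℝ) : ℝ := (∫ t in a..b, φ t) / (b - a)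

/-- `φ` belongs to the ball of radius `ε` of (quadratic-norm) BMO on the interval `(l, r)`. -/
def memBMOe (ε l r : ℝ) (φ : ℝ → ℝ) : Prop :=
  IntegrableOn φ (Ioo l r) ∧
  IntegrableOn (fun t => (φ t) ^ 2) (Ioo l r) ∧
  ∀ c d : ℝ, l ≤ c → c < d → d ≤ r →
    intAvg (fun t => (φ t) ^ 2) c d - (intAvg φ c d) ^ 2 ≤ ε ^ 2

/-- The Bellman function, computed with the interval `I = (0,1)`. -/
noncomputable def bellmanFn (ε : ℝ) (f : ℝ → ℝ) (x₁ x₂ : ℝ) : ℝ :=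
  sSup {y | ∃ φ : ℝ → ℝ, memBMOe ε 0 1 φ ∧
    IntegrableOn (fun t => f (φ t)) (Ioo 0 1) ∧
    intAvg φ 0 1 = x₁ ∧ intAvg (fun t => (φ t) ^ 2) 0 1 = x₂ ∧
    y = intAvg (fun t => f (φ t)) 0 1}

/-- The parabolic strip `Ω_ε`. -/
def parabStrip (ε : ℝ) : Set (ℝ × ℝ) := {x | x.1 ^ 2 ≤ x.2 ∧ x.2 ≤ x.1 ^ 2 + ε ^ 2}

/-- The parameter of the left tangent through `x`. -/
noncomputable def uLpt (ε : ℝ) (x : ℝ × ℝ) : ℝ :=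
  x.1 - ε + Real.sqrt (ε ^ 2 - (x.2 - x.1 ^ 2))

/-- The class `𝔚_{ε₀}`. -/
def memWcl (ε₀ : ℝ) (f f3 : ℝ → ℝ) : Prop :=
  ContDiff ℝ 2 f ∧
  (∀ x y : ℝ, x ≤ y → deriv (deriv f) y - deriv (deriv f) x = ∫ t in x..y, f3 t) ∧
  Integrable (fun t => f t * Real.exp (-|t| / ε₀)) ∧
  Integrable (fun t => deriv f t * Real.exp (-|t| / ε₀)) ∧
  Integrable (fun t => deriv (deriv f) t * Real.exp (-|t| / ε₀)) ∧
  Integrable (fun t => f3 t * Real.exp (-|t| / ε₀))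

lemma rs_open (F : Set ℝ) (hF : IsOpen F) (g : ℝ → ℝ) (p r : ℝ) (hFb : F ⊆ Ioo p r)
    (hg : IntegrableOn g F)
    (h : ∀ a b, a < b → Ioo a b ⊆ F → a ∉ F → b ∉ F → p ≤ a → b ≤ r →
      ∫ t in Ioo a b, g t ≤ 0) :
    ∫ t in F, g t ≤ 0 := by
  classical
  let S : Set (Set ℝ) := (fun x => connectedComponentIn F x) '' F
  have hopen : ∀ s ∈ S, IsOpen s := by
    rintro s ⟨x, hx, rfl⟩
    exact hF.connectedComponentIn
  have hne : ∀ s ∈ S, s.Nonempty := by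
    rintro s ⟨x, hx, rfl⟩
    exact ⟨x, mem_connectedComponentIn hx⟩
  have hdisj : S.PairwiseDisjoint id := by
    rintro s ⟨x, hx, rfl⟩ t ⟨y, hy, rfl⟩ hst
    simp only [Function.onFun, id]
    rw [Set.disjoint_left]
    intro z hz1 hz2
    apply hst
    simp only
    rw [connectedComponentIn_eq hz1, connectedComponentIn_eq hz2]
  have hcount : S.Countable := hdisj.countable_of_isOpen hopen hne
  have hU : F = ⋃ s : S, (s : Set ℝ) := by
    apply Subset.antisymm
    · intro x hx
      exact mem_iUnion.2 ⟨⟨_, x, hx, rfl⟩, mem_connectedComponentIn hx⟩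
    · apply iUnion_subset
      rintro ⟨s, x, hx, rfl⟩
      exact connectedComponentIn_subset F x
  have : Countable S := hcount.to_subtype
  have hs := hasSum_integral_iUnion (μ := volume) (f := g) (s := fun s : S => (s : Set ℝ))
    (fun s => (hopen s s.2).measurableSet)
    (fun s t hst => hdisj s.2 t.2 (fun hh => hst (Subtype.ext hh))) (by rw [← hU]; exact hg)
  rw [← hU] at hs
  refine hasSum_le (g := fun _ : S => (0:ℝ)) ?_ hs hasSum_zero
  rintro ⟨s, x, hx, rfl⟩
  simp only
  set C := connectedComponentIn F x with hC
  have hCo : IsOpen C := hF.connectedComponentIn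
  have hxC : x ∈ C := mem_connectedComponentIn hx
  have hCF : C ⊆ F := connectedComponentIn_subset F x
  have hCb : BddBelow C := ⟨p, fun y hy => (hFb (hCF hy)).1.le⟩
  have hCa : BddAbove C := ⟨r, fun y hy => (hFb (hCF hy)).2.le⟩
  have hpre : IsPreconnected C := isPreconnected_connectedComponentIn
  have ha : sInf C ∉ C := by
    intro hm
    obtain ⟨e, he, hb⟩ := Metric.isOpen_iff.1 hCo _ hm
    have : sInf C - e/2 ∈ C := hb (by rw [Metric.mem_ball, Real.dist_eq, abs_lt]; constructor <;> linarith)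
    have := csInf_le hCb this
    linarith
  have hb : sSup C ∉ C := by
    intro hm
    obtain ⟨e, he, hb⟩ := Metric.isOpen_iff.1 hCo _ hm
    have : sSup C + e/2 ∈ C := hb (by rw [Metric.mem_ball, Real.dist_eq, abs_lt]; constructor <;> linarith)
    have := le_csSup hCa this
    linarith
  have hsub : C ⊆ Ioo (sInf C) (sSup C) := fun y hy =>
    ⟨lt_of_le_of_ne (csInf_le hCb hy) (fun e => ha (e ▸ hy)),
      lt_of_le_of_ne (le_csSup hCa hy) (fun e => hb (e ▸ hy))⟩
  have hsup : Ioo (sInf C) (sSup C) ⊆ C := IsConnected.Ioo_csInf_csSup_subset ⟨⟨x, hxC⟩, hpre⟩ hCb hCa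
  have heq : C = Ioo (sInf C) (sSup C) := Subset.antisymm hsub hsup
  have hxI := hsub hxC
  rw [heq]
  apply h
  · exact hxI.1.trans hxI.2
  · exact hsup.trans hCF
  · intro haF
    apply ha
    have : Ico (sInf C) (sSup C) ⊆ C := by
      refine IsPreconnected.subset_connectedComponentIn isPreconnected_Ico ⟨hxI.1.le, hxI.2⟩ ?_
      intro y hy
      rcases eq_or_lt_of_le hy.1 with h1 | h1
      · rw [← h1]; exact haF
      · exact hCF (hsup ⟨h1, hy.2⟩)
    exact this ⟨le_rfl, hxI.1.trans hxI.2⟩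
  · intro haF
    apply hb
    have : Ioc (sInf C) (sSup C) ⊆ C := by
      refine IsPreconnected.subset_connectedComponentIn isPreconnected_Ioc ⟨hxI.1, hxI.2.le⟩ ?_
      intro y hy
      rcases eq_or_lt_of_le hy.2 with h1 | h1
      · rw [h1]; exact haF
      · exact hCF (hsup ⟨hy.1, h1⟩)
    exact this ⟨hxI.1.trans hxI.2, le_rfl⟩
  · exact le_csInf ⟨x, hxC⟩ (fun y hy => (hFb (hCF hy)).1.le)
  · exact csSup_le ⟨x, hxC⟩ (fun y hy => (hFb (hCF hy)).2.le)


lemma rs_crux (φ g : ℝ → ℝ) (hφ : Integrable φ) (hg : Integrable g)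
    (h0 : ∫ t in (0:ℝ)..1, φ t ≤ 0) (hneg : ∀ t ∈ Ioo (0:ℝ) 1, φ t ≤ 0 → g t ≤ 0)
    (hJ : ∀ c d : ℝ, 0 ≤ c → c < d → d ≤ 1 → ∫ t in c..d, φ t = 0 → ∫ t in c..d, g t ≤ 0) :
    ∫ t in (0:ℝ)..1, g t ≤ 0 := by
  set Φ : ℝ → ℝ := fun x => ∫ t in (0:ℝ)..x, φ t with hΦ
  have hii : ∀ a b, IntervalIntegrable φ volume a b := fun a b => hφ.intervalIntegrable
  have hgi : ∀ a b, IntervalIntegrable g volume a b := fun a b => hg.intervalIntegrable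
  have hc : Continuous Φ := intervalIntegral.continuous_primitive hii 0
  have hd : ∀ c d, ∫ t in c..d, φ t = Φ d - Φ c := fun c d => by
    rw [hΦ]; simp only
    rw [intervalIntegral.integral_interval_sub_left (hii _ _) (hii _ _)]
  have hJ' : ∀ c d : ℝ, 0 ≤ c → c ≤ d → d ≤ 1 → Φ c = Φ d → ∫ t in c..d, g t ≤ 0 := by
    intro c d h1 h2 h3 h4
    rcases eq_or_lt_of_le h2 with h | h
    · rw [h]; simp
    · exact hJ c d h1 h h3 (by rw [hd, h4, sub_self])
  have hΦ0 : Φ 0 = 0 := by simp [hΦ]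
  -- last zero
  obtain ⟨z, hz, hzmax⟩ := (isCompact_Icc.inter_right
    (isClosed_singleton.preimage hc) : IsCompact (Icc (0:ℝ) 1 ∩ Φ ⁻¹' {0})).exists_isMaxOn
    ⟨0, ⟨le_rfl, zero_le_one⟩, hΦ0⟩ continuousOn_id
  have hz0 : Φ z = 0 := hz.2
  have hzle : ∀ x, z ≤ x → x ≤ 1 → Φ x ≤ 0 := by
    intro x hx1 hx2
    by_contra! hcon
    obtain ⟨y, hy, hy0⟩ := intermediate_value_Icc' hx2 hc.continuousOn
      (show (0:ℝ) ∈ Icc (Φ 1) (Φ x) from ⟨h0, hcon.le⟩)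
    have h3 : y ≤ z := hzmax (show y ∈ Icc (0:ℝ) 1 ∩ Φ ⁻¹' {0} from
      ⟨⟨hz.1.1.trans (hx1.trans hy.1), hy.2⟩, hy0⟩)
    have : x = z := le_antisymm (hy.1.trans h3) hx1
    rw [this, hz0] at hcon
    exact lt_irrefl _ hcon
  have hpart1 : ∫ t in (0:ℝ)..z, g t ≤ 0 := hJ' 0 z le_rfl hz.1.1 hz.1.2 (by rw [hΦ0, hz0])
  have hpart2 : ∫ t in z..1, g t ≤ 0 := by
    set F : Set ℝ := {x | x ∈ Ioo z 1 ∧ ∃ y, x < y ∧ y ≤ 1 ∧ Φ x < Φ y} with hFdef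
    have hFo : IsOpen F := by
      have : F = ⋃ y ∈ Iic (1:ℝ), (Ioo z 1 ∩ (Iio y ∩ {x | Φ x < Φ y})) := by
        ext x
        simp only [hFdef, mem_ofPred_eq, mem_iUnion, mem_inter_iff, mem_Iio, mem_Iic, exists_prop]
        constructor
        · rintro ⟨h1, y, h2, h3, h4⟩; exact ⟨y, h3, h1, h2, h4⟩
        · rintro ⟨y, h3, h1, h2, h4⟩; exact ⟨h1, y, h2, h3, h4⟩
      rw [this]
      refine isOpen_biUnion fun y _ => isOpen_Ioo.inter (isOpen_Iio.inter ?_)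
      exact isOpen_lt hc continuous_const
    have hFsub : F ⊆ Ioo z 1 := fun x hx => hx.1
    have hF1 : ∫ t in F, g t ≤ 0 := by
      apply rs_open F hFo g z 1 hFsub hg.integrableOn
      intro a b hab hsub haF hbF hza hb1
      rw [← integral_Ioc_eq_integral_Ioo, ← intervalIntegral.integral_of_le hab.le]
      refine hJ' a b (hz.1.1.trans hza) hab.le hb1 ?_
      have hA : ∀ y, a ≤ y → y ≤ 1 → Φ y ≤ Φ a := by
        intro y h1 h2
        rcases eq_or_lt_of_le hza with h | h
        · rw [← h, hz0]; exact hzle y (h ▸ h1) h2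
        · rcases eq_or_lt_of_le h1 with h' | h'
          · rw [h']
          by_contra! hcon
          exact haF ⟨⟨h, hab.trans_le hb1⟩, y, h', h2, hcon⟩
      have hB : ∀ y, b ≤ y → y ≤ 1 → Φ y ≤ Φ b := by
        intro y h1 h2
        rcases eq_or_lt_of_le h1 with h' | h'
        · rw [h']
        by_contra! hcon
        exact hbF ⟨⟨hza.trans_lt hab, h'.trans_le h2⟩, y, h', h2, hcon⟩
      refine le_antisymm ?_ (hA b hab.le hb1)
      by_contra! hcon
      have hev : ∀ᶠ x in nhdsWithin a (Ioi a), Φ b < Φ x :=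
        (hc.continuousAt.eventually (lt_mem_nhds hcon)).filter_mono nhdsWithin_le_nhds
      obtain ⟨x0, hx0, hx0a, hx0b⟩ := (hev.and (Ioo_mem_nhdsGT hab)).exists
      obtain ⟨w, hw, hwmax⟩ := (isCompact_Icc : IsCompact (Icc x0 1)).exists_isMaxOn
        ⟨x0, le_rfl, hx0b.le.trans hb1⟩ hc.continuousOn
      have hw1 : Φ x0 ≤ Φ w := hwmax (show x0 ∈ Icc x0 1 from ⟨le_rfl, hx0b.le.trans hb1⟩)
      have hwb : w < b := by
        by_contra! h
        have := hB w h hw.2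
        linarith
      obtain ⟨-, y, hy1, hy2, hy3⟩ := hsub (show w ∈ Ioo a b from ⟨hx0a.trans_le hw.1, hwb⟩)
      have : Φ y ≤ Φ w := hwmax (show y ∈ Icc x0 1 from ⟨hw.1.trans hy1.le, hy2⟩)
      linarith
    have hF2 : ∫ t in Ioo z 1 \ F, g t ≤ 0 := by
      apply setIntegral_nonpos_of_ae_restrict
      rw [Filter.EventuallyLE, ae_restrict_iff' (measurableSet_Ioo.diff hFo.measurableSet)]
      filter_upwards [LocallyIntegrable.ae_hasDerivAt_integral hφ.locallyIntegrable] with x hx hxm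
      have hx' := hx 0
      refine hneg x ⟨hz.1.1.trans_lt hxm.1.1, hxm.1.2⟩ ?_
      have ht := hasDerivAt_iff_tendsto_slope.1 hx'
      have ht2 := ht.mono_left (nhdsWithin_mono x (show Ioi x ⊆ {x}ᶜ from fun y hy => ne_of_gt hy))
      refine le_of_tendsto ht2 ?_
      filter_upwards [Ioo_mem_nhdsGT hxm.1.2] with y hy
      have hle : Φ y ≤ Φ x := by
        by_contra! hcon
        exact hxm.2 ⟨hxm.1, y, hy.1, hy.2.le, hcon⟩
      rw [slope_def_field]
      exact div_nonpos_of_nonpos_of_nonneg (sub_nonpos.2 hle) (sub_nonneg.2 hy.1.le)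
    rw [intervalIntegral.integral_of_le hz.1.2, integral_Ioc_eq_integral_Ioo,
      ← integral_inter_add_sdiff hFo.measurableSet hg.integrableOn,
      inter_eq_self_of_subset_right hFsub]
    linarith
  rw [← intervalIntegral.integral_add_adjacent_intervals (hgi 0 z) (hgi z 1)]
  linarith

/-- positive part -/
noncomputable def pp (z : ℝ) : ℝ := max z 0

lemma pp_cont : Continuous pp := continuous_id.max continuous_const
lemma pp_nonneg (z : ℝ) : 0 ≤ pp z := le_max_right _ _
lemma pp_of_nonneg {z : ℝ} (h : 0 ≤ z) : pp z = z := max_eq_left h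
lemma pp_of_nonpos {z : ℝ} (h : z ≤ 0) : pp z = 0 := max_eq_right h
lemma pp_le_abs (z : ℝ) : pp z ≤ |z| := max_le (le_abs_self z) (abs_nonneg z)
lemma pp_mono {a b : ℝ} (h : a ≤ b) : pp a ≤ pp b := max_le_max h le_rfl

lemma pp_int {μ : Measure ℝ} [IsFiniteMeasure μ] {φ : ℝ → ℝ} (h1 : Integrable φ μ) (w : ℝ) :
    Integrable (fun t => pp (φ t - w)) μ := by
  refine (h1.sub (integrable_const w)).mono
    (pp_cont.comp_aestronglyMeasurable (h1.1.sub aestronglyMeasurable_const)) ?_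
  refine Filter.Eventually.of_forall fun t => ?_
  simp only [Real.norm_eq_abs, abs_of_nonneg (pp_nonneg _), Pi.sub_apply]
  exact pp_le_abs _

lemma sq_sub_int {μ : Measure ℝ} [IsFiniteMeasure μ] {φ : ℝ → ℝ} (h1 : Integrable φ μ)
    (h2 : Integrable (fun t => φ t ^ 2) μ) (w : ℝ) :
    Integrable (fun t => (φ t - w) ^ 2) μ := by
  have : (fun t => (φ t - w) ^ 2) = fun t => (φ t ^ 2 - 2 * w * φ t) + w ^ 2 := by
    funext t; ring
  rw [this]
  exact (h2.sub (h1.const_mul _)).add (integrable_const _)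

lemma pp_sq_int {μ : Measure ℝ} [IsFiniteMeasure μ] {φ : ℝ → ℝ} (h1 : Integrable φ μ)
    (h2 : Integrable (fun t => φ t ^ 2) μ) (w : ℝ) :
    Integrable (fun t => pp (φ t - w) ^ 2) μ := by
  refine (sq_sub_int h1 h2 w).mono
    ((pp_cont.comp_aestronglyMeasurable (h1.1.sub aestronglyMeasurable_const)).pow 2) ?_
  refine Filter.Eventually.of_forall fun t => ?_
  simp only [Real.norm_eq_abs]
  rw [abs_of_nonneg (sq_nonneg (pp (φ t - w))), abs_of_nonneg (sq_nonneg (φ t - w)),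
    ← sq_abs (φ t - w)]
  exact pow_le_pow_left₀ (pp_nonneg _) (pp_le_abs _) 2

lemma ind_interval (g : ℝ → ℝ) {c d : ℝ} (h0 : 0 ≤ c) (h1 : c ≤ d) (h2 : d ≤ 1) :
    ∫ t in c..d, (Ioo (0:ℝ) 1).indicator g t = ∫ t in c..d, g t := by
  rw [intervalIntegral.integral_of_le h1, intervalIntegral.integral_of_le h1,
    integral_Ioc_eq_integral_Ioo, integral_Ioc_eq_integral_Ioo]
  refine setIntegral_congr_fun measurableSet_Ioo fun t ht => ?_
  exact indicator_of_mem (show t ∈ Ioo (0:ℝ) 1 from ⟨h0.trans_lt ht.1, ht.2.trans_le h2⟩) g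

lemma ii_sub {g : ℝ → ℝ} (hg : IntegrableOn g (Ioo (0:ℝ) 1)) {c d : ℝ} (h0 : 0 ≤ c) (h1 : c ≤ d)
    (h2 : d ≤ 1) : IntervalIntegrable g volume c d := by
  rw [intervalIntegrable_iff_integrableOn_Ioo_of_le h1]
  exact hg.mono_set (Ioo_subset_Ioo h0 h2)

lemma crux_bmo {ε : ℝ} (hε : 0 < ε) {φ : ℝ → ℝ} (h : memBMOe ε 0 1 φ) {w : ℝ}
    (hx : intAvg φ 0 1 ≤ w + ε) :
    ∫ t in Ioo (0:ℝ) 1, pp (φ t - w) ^ 2 ≤ 2 * ε * ∫ t in Ioo (0:ℝ) 1, pp (φ t - w) := by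
  obtain ⟨h1, h2, h3⟩ := h
  have hp1 := pp_int h1 w
  have hp2 := pp_sq_int h1 h2 w
  have hgI : IntegrableOn (fun t => pp (φ t - w) ^ 2 - 2 * ε * pp (φ t - w)) (Ioo (0:ℝ) 1) :=
    hp2.sub (hp1.const_mul _)
  have hφI : IntegrableOn (fun t => φ t - (w + ε)) (Ioo (0:ℝ) 1) := h1.sub (integrable_const _)
  have key := rs_crux ((Ioo (0:ℝ) 1).indicator fun t => φ t - (w + ε))
    ((Ioo (0:ℝ) 1).indicator fun t => pp (φ t - w) ^ 2 - 2 * ε * pp (φ t - w))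
    (hφI.integrable_indicator measurableSet_Ioo) (hgI.integrable_indicator measurableSet_Ioo)
    ?_ ?_ ?_
  · rw [ind_interval _ le_rfl zero_le_one le_rfl, intervalIntegral.integral_of_le zero_le_one,
      integral_Ioc_eq_integral_Ioo, integral_sub hp2 (hp1.const_mul _), integral_const_mul] at key
    linarith
  · rw [ind_interval _ le_rfl zero_le_one le_rfl,
      intervalIntegral.integral_sub (ii_sub h1 le_rfl zero_le_one le_rfl) intervalIntegrable_const]
    simp only [intAvg, sub_zero, div_one] at hx
    simp
    linarith
  · intro t ht
    rw [indicator_of_mem ht, indicator_of_mem ht]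
    intro hle
    have a1 : pp (φ t - w) ≤ ε := max_le (by linarith) hε.le
    have a2 := pp_nonneg (φ t - w)
    nlinarith
  · intro c d hc hcd hd
    rw [ind_interval _ hc hcd.le hd, ind_interval _ hc hcd.le hd]
    have i1 : IntervalIntegrable φ volume c d := ii_sub h1 hc hcd.le hd
    have i2 : IntervalIntegrable (fun t => φ t ^ 2) volume c d := ii_sub h2 hc hcd.le hd
    rw [intervalIntegral.integral_sub i1 intervalIntegrable_const]
    simp only [intervalIntegral.integral_const, smul_eq_mul]
    intro hz
    have hv := h3 c d hc hcd hd
    have hdc : 0 < d - c := sub_pos.2 hcd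
    have hav : intAvg φ c d = w + ε := by
      rw [intAvg, div_eq_iff hdc.ne']; linarith
    rw [hav] at hv
    have hv2 : ∫ t in c..d, φ t ^ 2 ≤ (ε ^ 2 + (w + ε) ^ 2) * (d - c) := by
      rw [← div_le_iff₀ hdc]
      have : intAvg (fun t => φ t ^ 2) c d = (∫ t in c..d, φ t ^ 2) / (d - c) := rfl
      linarith
    have hle : ∫ t in c..d, (pp (φ t - w) ^ 2 - 2 * ε * pp (φ t - w)) ≤
        ∫ t in c..d, (φ t ^ 2 - (2 * (w + ε)) * φ t + (w ^ 2 + 2 * ε * w)) := by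
      refine intervalIntegral.integral_mono_on hcd.le (ii_sub hgI hc hcd.le hd)
        ((i2.sub (i1.const_mul _)).add intervalIntegrable_const) ?_
      intro t _
      rcases le_total 0 (φ t - w) with h | h
      · rw [pp_of_nonneg h]; apply le_of_eq; ring
      · rw [pp_of_nonpos h]
        have : φ t ^ 2 - 2 * (w + ε) * φ t + (w ^ 2 + 2 * ε * w) =
          (φ t - w) ^ 2 + 2 * ε * (w - φ t) := by ring
        rw [this]
        have : 0 ≤ 2 * ε * (w - φ t) := by
          apply mul_nonneg <;> linarith
        nlinarith [sq_nonneg (φ t - w)]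
    rw [intervalIntegral.integral_add (i2.sub (i1.const_mul _)) intervalIntegrable_const,
      intervalIntegral.integral_sub i2 (i1.const_mul _), intervalIntegral.integral_const_mul,
      intervalIntegral.integral_const, smul_eq_mul] at hle
    have e1 : ∫ t in c..d, φ t = (d - c) * (w + ε) := by linarith
    rw [e1] at hle
    refine hle.trans ?_
    nlinarith

/-- exponential decay -/
lemma pp_decay {ε : ℝ} (hε : 0 < ε) {φ : ℝ → ℝ} (h : memBMOe ε 0 1 φ) {u : ℝ}
    (hx : intAvg φ 0 1 ≤ u + ε) {s : ℝ} (hs : 0 ≤ s) :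
    ∫ t in Ioo (0:ℝ) 1, pp (φ t - (u + s)) ^ 2 ≤
      (∫ t in Ioo (0:ℝ) 1, pp (φ t - u) ^ 2) * Real.exp (-s / ε) := by
  set H : ℝ → ℝ := fun w => ∫ t in Ioo (0:ℝ) 1, pp (φ t - w) ^ 2 with hH
  have step : ∀ w, u ≤ w → ∀ δ, 0 ≤ δ → H (w + δ) * (1 + δ / ε) ≤ H w := by
    intro w hw δ hδ
    have c1 := crux_bmo hε h (w := w + δ) (by linarith)
    have hp1 := pp_int h.1 (w + δ)
    have hp2 := pp_sq_int h.1 h.2.1 (w + δ)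
    have c2 : ∫ t in Ioo (0:ℝ) 1, (pp (φ t - (w + δ)) ^ 2 + (2 * δ) * pp (φ t - (w + δ))) ≤ H w := by
      refine integral_mono (hp2.add (hp1.const_mul _)) (pp_sq_int h.1 h.2.1 w) ?_
      intro t
      simp only
      rcases le_total 0 (φ t - (w + δ)) with h | h
      · rw [pp_of_nonneg h, pp_of_nonneg (show 0 ≤ φ t - w by linarith)]
        nlinarith
      · rw [pp_of_nonpos h]
        nlinarith [sq_nonneg (pp (φ t - w))]
    rw [integral_add hp2 (hp1.const_mul _), integral_const_mul] at c2
    have c3 : H (w + δ) * (δ / ε) ≤ 2 * δ * ∫ t in Ioo (0:ℝ) 1, pp (φ t - (w + δ)) := by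
      calc H (w + δ) * (δ / ε) ≤ (2 * ε * ∫ t in Ioo (0:ℝ) 1, pp (φ t - (w + δ))) * (δ / ε) :=
            mul_le_mul_of_nonneg_right c1 (by positivity)
        _ = _ := by field_simp
    have : H (w + δ) = ∫ t in Ioo (0:ℝ) 1, pp (φ t - (w + δ)) ^ 2 := rfl
    nlinarith
  have step2 : ∀ δ, 0 ≤ δ → ∀ n : ℕ, H (u + n * δ) * (1 + δ / ε) ^ n ≤ H u := by
    intro δ hδ n
    induction n with
    | zero => simp
    | succ k ih =>
      have := step (u + k * δ) (by have : 0 ≤ (k:ℝ) * δ := by positivity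
                                   linarith) δ hδ
      have e : u + ((k + 1 : ℕ) : ℝ) * δ = u + k * δ + δ := by push_cast; ring
      rw [e, pow_succ]
      calc H (u + k * δ + δ) * ((1 + δ / ε) ^ k * (1 + δ / ε))
          = (H (u + k * δ + δ) * (1 + δ / ε)) * (1 + δ / ε) ^ k := by ring
        _ ≤ H (u + k * δ) * (1 + δ / ε) ^ k := by
            apply mul_le_mul_of_nonneg_right this; positivity
        _ ≤ _ := ih
  have lim := (Real.tendsto_one_add_div_pow_exp (s / ε)).const_mul (H (u + s))
  have fin : H (u + s) * Real.exp (s / ε) ≤ H u := by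
    refine le_of_tendsto lim ?_
    filter_upwards [Filter.eventually_gt_atTop 0] with n hn
    have := step2 (s / n) (by positivity) n
    have hn' : (n:ℝ) ≠ 0 := by positivity
    rw [mul_div_cancel₀ _ hn'] at this
    rw [div_right_comm]
    exact this
  have : H (u + s) = H (u + s) * Real.exp (s / ε) * Real.exp (-s / ε) := by
    rw [mul_assoc, ← Real.exp_add, neg_div, add_neg_cancel, Real.exp_zero, mul_one]
  change H (u + s) ≤ H u * Real.exp (-s / ε)
  rw [this]
  exact mul_le_mul_of_nonneg_right fin (Real.exp_pos _).le

noncomputable def PT (ε : ℝ) (k : ℝ → ℝ) (w : ℝ) : ℝ :=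
  ε⁻¹ * Real.exp (w / ε) * ∫ t in Ici w, k t * Real.exp (-t / ε)

lemma W_mono {ε ε₀ : ℝ} (hε : 0 < ε) (hεε₀ : ε < ε₀) {w t : ℝ} (h : w ≤ t) :
    w / ε - |w| / ε₀ ≤ t / ε - |t| / ε₀ := by
  have h1 : |t| - |w| ≤ t - w := by
    have := abs_sub_abs_le_abs_sub t w
    rwa [abs_of_nonneg (sub_nonneg.2 h)] at this
  have h0 : 0 < ε₀ := hε.trans hεε₀
  have h2 : (|t| - |w|) / ε₀ ≤ (t - w) / ε₀ := by gcongr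
  have h3 : (t - w) / ε₀ ≤ (t - w) / ε :=
    div_le_div_of_nonneg_left (sub_nonneg.2 h) hε hεε₀.le
  rw [sub_div] at h2
  rw [sub_div (c := ε)] at h3
  linarith

lemma PT_int {ε ε₀ : ℝ} (hε : 0 < ε) (hεε₀ : ε < ε₀) {k : ℝ → ℝ}
    (hk : Integrable (fun t => k t * Real.exp (-|t| / ε₀))) (w : ℝ) :
    IntegrableOn (fun t => k t * Real.exp (-t / ε)) (Ici w) ∧
    ‖∫ t in Ici w, k t * Real.exp (-t / ε)‖ ≤
      (∫ t, ‖k t * Real.exp (-|t| / ε₀)‖) * Real.exp (-(w / ε - |w| / ε₀)) := by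
  have e : (fun t => k t * Real.exp (-t / ε)) =
      fun t => (k t * Real.exp (-|t| / ε₀)) * Real.exp (-(t / ε - |t| / ε₀)) := by
    funext t
    rw [mul_assoc, ← Real.exp_add]
    congr 2
    ring
  have hm : AEStronglyMeasurable (fun t => k t * Real.exp (-t / ε)) (volume.restrict (Ici w)) := by
    rw [e]
    refine hk.1.restrict.mul (Continuous.aestronglyMeasurable ?_)
    fun_prop
  have hb : ∀ t ∈ Ici w, ‖k t * Real.exp (-t / ε)‖ ≤
      ‖k t * Real.exp (-|t| / ε₀)‖ * Real.exp (-(w / ε - |w| / ε₀)) := by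
    intro t ht
    have := congrFun e t
    rw [this, norm_mul]
    refine mul_le_mul_of_nonneg_left ?_ (norm_nonneg _)
    rw [Real.norm_eq_abs, abs_of_pos (Real.exp_pos _), Real.exp_le_exp]
    exact neg_le_neg (W_mono hε hεε₀ ht)
  have hi : IntegrableOn (fun t => ‖k t * Real.exp (-|t| / ε₀)‖ * Real.exp (-(w / ε - |w| / ε₀)))
    (Ici w) := (hk.norm.mul_const _).integrableOn
  refine ⟨hi.mono' hm ((ae_restrict_iff' measurableSet_Ici).2 (Filter.Eventually.of_forall hb)), ?_⟩
  refine (norm_integral_le_of_norm_le hi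
    ((ae_restrict_iff' measurableSet_Ici).2 (Filter.Eventually.of_forall hb))).trans ?_
  rw [integral_mul_const]
  refine mul_le_mul_of_nonneg_right ?_ (Real.exp_pos _).le
  exact setIntegral_le_integral hk.norm (Filter.Eventually.of_forall fun t => norm_nonneg _)

lemma exp_tail {ε : ℝ} (hε : 0 < ε) (s : ℝ) :
    IntegrableOn (fun t => Real.exp (-t / ε)) (Ioi s) ∧
    ∫ t in Ioi s, Real.exp (-t / ε) = ε * Real.exp (-s / ε) := by
  have e : (fun t => Real.exp (-t / ε)) = fun t => Real.exp ((-ε⁻¹) * t) := by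
    funext t; congr 1; field_simp
  have hn : -ε⁻¹ < 0 := by simpa using hε
  rw [e]
  refine ⟨integrableOn_exp_mul_Ioi hn s, ?_⟩
  rw [integral_exp_mul_Ioi hn]
  rw [show -ε⁻¹ * s = -s / ε by field_simp]
  field_simp

lemma PT_parts {ε ε₀ : ℝ} (hε : 0 < ε) (hεε₀ : ε < ε₀) {k k1 : ℝ → ℝ}
    (hkk : ∀ x y : ℝ, x ≤ y → k y - k x = ∫ t in x..y, k1 t)
    (hk : Integrable (fun t => k t * Real.exp (-|t| / ε₀)))
    (hk1 : Integrable (fun t => k1 t * Real.exp (-|t| / ε₀))) (w : ℝ) :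
    PT ε k w = k w + ε * PT ε k1 w := by
  have I0 := (PT_int hε hεε₀ hk w).1
  have I1 := (PT_int hε hεε₀ hk1 w).1
  have main : ∫ t in Ici w, k t * Real.exp (-t / ε) =
      ε * k w * Real.exp (-w / ε) + ε * ∫ t in Ici w, k1 t * Real.exp (-t / ε) := by
    rw [integral_Ici_eq_integral_Ioi, integral_Ici_eq_integral_Ioi]
    replace I0 := I0.mono_set Ioi_subset_Ici_self
    replace I1 := I1.mono_set Ioi_subset_Ici_self
    obtain ⟨T1, T2⟩ := exp_tail hε w
    set μ := volume.restrict (Ioi w) with hμ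
    let Fn : ℝ → ℝ → ℝ := fun s t => (Ici s).indicator (fun t => k1 s * Real.exp (-t / ε)) t
    have hk1m : AEStronglyMeasurable k1 μ := by
      have e : k1 = fun t => (k1 t * Real.exp (-t / ε)) * Real.exp (t / ε) := by
        funext t
        rw [mul_assoc, ← Real.exp_add, neg_div, neg_add_cancel, Real.exp_zero, mul_one]
      rw [e]
      refine I1.1.mul (Continuous.aestronglyMeasurable ?_)
      fun_prop
    have hFm : AEStronglyMeasurable (Function.uncurry Fn) (μ.prod μ) := by
      have e : Function.uncurry Fn = {p : ℝ × ℝ | p.1 ≤ p.2}.indicator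
          (fun p => k1 p.1 * Real.exp (-p.2 / ε)) := by
        funext ⟨s, t⟩
        simp only [Function.uncurry, Fn, indicator, mem_Ici, mem_ofPred_eq]
      rw [e]
      refine AEStronglyMeasurable.indicator ?_ (measurableSet_le measurable_fst measurable_snd)
      refine hk1m.comp_fst.mul (Continuous.aestronglyMeasurable ?_)
      fun_prop
    have hin : ∀ s ∈ Ioi w, ∀ c : ℝ, ∫ t, (Ici s).indicator (fun t => c * Real.exp (-t / ε)) t ∂μ
        = c * (ε * Real.exp (-s / ε)) := by
      intro s hs c
      rw [integral_indicator measurableSet_Ici, hμ, Measure.restrict_restrict measurableSet_Ici,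
        inter_eq_self_of_subset_left (Ici_subset_Ioi.2 hs), integral_Ici_eq_integral_Ioi,
        integral_const_mul, (exp_tail hε s).2]
    have hFi : Integrable (Function.uncurry Fn) (μ.prod μ) := by
      rw [integrable_prod_iff hFm]
      constructor
      · refine Filter.Eventually.of_forall fun s => ?_
        simp only [Function.uncurry, Fn]
        exact (T1.const_mul (k1 s)).indicator measurableSet_Ici
      · have : (fun s => ∫ t, ‖Function.uncurry Fn (s, t)‖ ∂μ) =ᵐ[μ]
            fun s => ε * ‖k1 s * Real.exp (-s / ε)‖ := by
          refine (ae_restrict_iff' measurableSet_Ioi).2 (Filter.Eventually.of_forall fun s hs => ?_)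
          simp only [Function.uncurry, Fn]
          simp only [norm_indicator_eq_indicator_norm, norm_mul, Real.norm_eq_abs,
            Real.abs_exp]
          rw [hin s hs]
          ring
        rw [integrable_congr this]
        exact I1.norm.const_mul ε
    have swap := integral_integral_swap hFi
    have L : ∫ s, ∫ t, Fn s t ∂μ ∂μ = ε * ∫ s, k1 s * Real.exp (-s / ε) ∂μ := by
      rw [← integral_const_mul]
      refine setIntegral_congr_fun measurableSet_Ioi fun s hs => ?_
      simp only [Fn]
      rw [hin s hs]
      ring
    have R : ∫ t, ∫ s, Fn s t ∂μ ∂μ = ∫ t, (k t - k w) * Real.exp (-t / ε) ∂μ := by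
      refine setIntegral_congr_fun measurableSet_Ioi fun t ht => ?_
      simp only [Fn]
      have e : (fun s => (Ici s).indicator (fun t => k1 s * Real.exp (-t / ε)) t) =
          (Iic t).indicator (fun s => k1 s * Real.exp (-t / ε)) := by
        funext s
        simp only [indicator, mem_Ici, mem_Iic]
      rw [e, integral_indicator measurableSet_Iic, hμ, Measure.restrict_restrict measurableSet_Iic,
        integral_mul_const, hkk w t (le_of_lt ht), intervalIntegral.integral_of_le (le_of_lt ht),
        inter_comm, Ioi_inter_Iic]
    rw [L, R] at swap
    rw [swap]
    have : ∫ t, (k t - k w) * Real.exp (-t / ε) ∂μ =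
        ∫ t, k t * Real.exp (-t / ε) ∂μ - k w * ∫ t, Real.exp (-t / ε) ∂μ := by
      rw [← integral_const_mul, ← integral_sub I0 (T1.const_mul _)]
      congr 1
      funext t
      ring
    rw [this, T2]
    ring
  unfold PT
  rw [main]
  have : Real.exp (w / ε) * Real.exp (-w / ε) = 1 := by
    rw [← Real.exp_add, neg_div, add_neg_cancel, Real.exp_zero]
  calc ε⁻¹ * Real.exp (w / ε) * (ε * k w * Real.exp (-w / ε) +
        ε * ∫ t in Ici w, k1 t * Real.exp (-t / ε))
      = (ε⁻¹ * ε) * k w * (Real.exp (w / ε) * Real.exp (-w / ε)) + ε * (ε⁻¹ * Real.exp (w / ε) *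
         ∫ t in Ici w, k1 t * Real.exp (-t / ε)) := by ring
    _ = _ := by rw [this, inv_mul_cancel₀ hε.ne']; ring

lemma PT_deriv {ε ε₀ : ℝ} (hε : 0 < ε) (hεε₀ : ε < ε₀) {k : ℝ → ℝ} (hc : Continuous k)
    (hk : Integrable (fun t => k t * Real.exp (-|t| / ε₀))) (w : ℝ) :
    HasDerivAt (PT ε k) ((PT ε k w - k w) / ε) w := by
  set g : ℝ → ℝ := fun t => k t * Real.exp (-t / ε) with hg
  have hgc : Continuous g := by fun_prop
  have hgI : ∀ a, IntegrableOn g (Ioi a) := fun a =>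
    (PT_int hε hεε₀ hk a).1.mono_set Ioi_subset_Ici_self
  have e : PT ε k = fun x => ε⁻¹ * Real.exp (x / ε) * ((∫ t in Ioi w, g t) - ∫ t in w..x, g t) := by
    funext x
    unfold PT
    rw [integral_Ici_eq_integral_Ioi,
      ← intervalIntegral.integral_interval_add_Ioi (hgI w) (hgI x)]
    ring
  have d1 : HasDerivAt (fun x => ∫ t in w..x, g t) (g w) w :=
    hgc.integral_hasStrictDerivAt w w |>.hasDerivAt
  have d2 : HasDerivAt (fun x : ℝ => ε⁻¹ * Real.exp (x / ε)) (ε⁻¹ * (Real.exp (w / ε) * (1 / ε))) w :=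
    (((hasDerivAt_id w).div_const ε).exp).const_mul _
  have d3 := d2.mul (d1.const_sub (∫ t in Ioi w, g t))
  have ew : PT ε k w = ε⁻¹ * Real.exp (w / ε) * ∫ t in Ioi w, g t := by
    unfold PT; rw [integral_Ici_eq_integral_Ioi]
  rw [ew, e]
  refine HasDerivAt.congr_deriv (f := fun x => ε⁻¹ * Real.exp (x / ε) *
    ((∫ t in Ioi w, g t) - ∫ t in w..x, g t)) d3 ?_
  simp only [intervalIntegral.integral_same, sub_zero, hg]
  have : Real.exp (w / ε) * Real.exp (-w / ε) = 1 := by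
    rw [← Real.exp_add, neg_div, add_neg_cancel, Real.exp_zero]
  have h2 : ε⁻¹ * Real.exp (w / ε) * -(k w * Real.exp (-w / ε)) = - k w / ε := by
    calc _ = -ε⁻¹ * k w * (Real.exp (w / ε) * Real.exp (-w / ε)) := by ring
      _ = _ := by rw [this]; field_simp
  rw [h2]
  ring

noncomputable def KK (ε z : ℝ) : ℝ := ε * pp z - pp z ^ 2 / 2

lemma KK_cont (ε : ℝ) : Continuous (KK ε) := by
  unfold KK
  have := pp_cont
  fun_prop

lemma pp_le_sq (z : ℝ) : pp z ≤ pp (z + 1) ^ 2 := by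
  rcases le_total 0 z with h | h
  · rw [pp_of_nonneg h, pp_of_nonneg (by linarith)]; nlinarith
  · rw [pp_of_nonpos h]; positivity

lemma KK_bound {ε : ℝ} (hε : 0 < ε) (z : ℝ) : ‖KK ε z‖ ≤ (ε + 1 / 2) * pp (z + 1) ^ 2 := by
  have h1 := pp_le_sq z
  have h2 : pp z ^ 2 ≤ pp (z + 1) ^ 2 :=
    pow_le_pow_left₀ (pp_nonneg _) (pp_mono (by linarith)) 2
  have h3 := pp_nonneg z
  have h4 : ε * pp z ≤ ε * pp (z + 1) ^ 2 := mul_le_mul_of_nonneg_left h1 hε.le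
  have h5 : 0 ≤ ε * pp z := mul_nonneg hε.le h3
  have h6 : 0 ≤ ε * pp (z + 1) ^ 2 := by positivity
  unfold KK
  rw [Real.norm_eq_abs, abs_le]
  constructor <;> nlinarith [sq_nonneg (pp z)]

lemma upper_fubini {ε ε₀ A : ℝ} (hε : 0 < ε) (hεε₀ : ε < ε₀) {q : ℝ → ℝ} (hq : Continuous q)
    (hq0 : ∀ w, 0 ≤ q w) (hqA : ∀ w, q w ≤ A * Real.exp (|w| / ε₀))
    {φ : ℝ → ℝ} (h : memBMOe ε 0 1 φ) {u : ℝ} (hx : intAvg φ 0 1 ≤ u + ε) :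
    IntegrableOn (fun t => ∫ w in Ioi u, q w * KK ε (φ t - w)) (Ioo (0:ℝ) 1) ∧
    0 ≤ ∫ t in Ioo (0:ℝ) 1, ∫ w in Ioi u, q w * KK ε (φ t - w) := by
  have h0 : 0 < ε₀ := hε.trans hεε₀
  set μ := volume.restrict (Ioo (0:ℝ) 1) with hμ
  set ν := volume.restrict (Ioi u) with hν
  let Fn : ℝ → ℝ → ℝ := fun t w => q w * KK ε (φ t - w)
  have h1 : Integrable φ μ := h.1
  have h2 : Integrable (fun t => φ t ^ 2) μ := h.2.1
  have hFm : AEStronglyMeasurable (Function.uncurry Fn) (μ.prod ν) := by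
    refine AEStronglyMeasurable.mul ?_ ?_
    · exact (hq.comp continuous_snd).aestronglyMeasurable
    · refine (KK_cont ε).comp_aestronglyMeasurable (AEStronglyMeasurable.sub ?_ ?_)
      · exact h1.1.comp_fst
      · exact continuous_snd.aestronglyMeasurable
  have hKi : ∀ w, Integrable (fun t => KK ε (φ t - w)) μ := fun w =>
    ((pp_int h1 w).const_mul ε).sub ((pp_sq_int h1 h2 w).div_const 2)
  have hA : 0 ≤ A := by
    have := (hq0 0).trans (hqA 0)
    simpa using this
  set H : ℝ → ℝ := fun w => ∫ t, pp (φ t - w) ^ 2 ∂μ with hH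
  have hH0 : ∀ w, 0 ≤ H w := fun w => integral_nonneg fun t => sq_nonneg _
  have hHm : ∀ a b, a ≤ b → H b ≤ H a := by
    intro a b hab
    refine integral_mono (pp_sq_int h1 h2 b) (pp_sq_int h1 h2 a) fun t => ?_
    exact pow_le_pow_left₀ (pp_nonneg _) (pp_mono (by linarith)) 2
  have hHd : ∀ w, u < w → H (w - 1) ≤ H (u - 1) * Real.exp ((1 - (w - u)) / ε) := by
    intro w hw
    rcases le_total 1 (w - u) with h' | h'
    · have := pp_decay hε h hx (s := w - u - 1) (by linarith)
      rw [show u + (w - u - 1) = w - 1 by ring, show -(w - u - 1) = 1 - (w - u) by ring] at this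
      exact this.trans (mul_le_mul_of_nonneg_right (hHm _ _ (by linarith)) (Real.exp_pos _).le)
    · have e1 : 1 ≤ Real.exp ((1 - (w - u)) / ε) :=
        Real.one_le_exp (div_nonneg (by linarith) hε.le)
      calc H (w - 1) ≤ H (u - 1) * 1 := by rw [mul_one]; exact hHm _ _ (by linarith)
        _ ≤ _ := mul_le_mul_of_nonneg_left e1 (hH0 _)
  set c : ℝ := 1 / ε - 1 / ε₀ with hc
  have hcpos : 0 < c := sub_pos.2 (one_div_lt_one_div_of_lt hε hεε₀)
  set C : ℝ := A * ((ε + 1 / 2) * H (u - 1)) * Real.exp ((1 + u) / ε + 2 * |u| / ε₀) with hC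
  have hFi : Integrable (Function.uncurry Fn) (μ.prod ν) := by
    rw [integrable_prod_iff' hFm]
    constructor
    · refine Filter.Eventually.of_forall fun w => ?_
      exact (hKi w).const_mul (q w)
    · have hmeas : AEStronglyMeasurable (fun w => ∫ t, ‖Function.uncurry Fn (t, w)‖ ∂μ) ν :=
        hFm.norm.prod_swap.integral_prod_right'
      have hint : Integrable (fun w => C * Real.exp (-c * w)) ν :=
        (integrableOn_exp_mul_Ioi (by linarith) u).const_mul C
      refine hint.mono' hmeas ?_
      refine (ae_restrict_iff' measurableSet_Ioi).2 (Filter.Eventually.of_forall fun w hw => ?_)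
      rw [Real.norm_eq_abs, abs_of_nonneg (integral_nonneg fun t => norm_nonneg _)]
      have b1 : ∫ t, ‖Function.uncurry Fn (t, w)‖ ∂μ ≤ q w * ((ε + 1 / 2) * H (w - 1)) := by
        rw [hH]
        simp only
        rw [← integral_const_mul, ← integral_const_mul]
        refine integral_mono ((hKi w).const_mul (q w)).norm
          (((pp_sq_int h1 h2 (w - 1)).const_mul _).const_mul _) fun t => ?_
        simp only [Function.uncurry, Fn, norm_mul]
        rw [Real.norm_eq_abs (q w), abs_of_nonneg (hq0 w)]
        refine mul_le_mul_of_nonneg_left ?_ (hq0 w)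
        have := KK_bound hε (φ t - w)
        rwa [show φ t - w + 1 = φ t - (w - 1) by ring] at this
      refine b1.trans ?_
      have b2 : q w * ((ε + 1 / 2) * H (w - 1)) ≤ (A * Real.exp (|w| / ε₀)) *
          ((ε + 1 / 2) * (H (u - 1) * Real.exp ((1 - (w - u)) / ε))) := by
        refine mul_le_mul (hqA w) ?_ ?_ ?_
        · exact mul_le_mul_of_nonneg_left (hHd w hw) (by positivity)
        · exact mul_nonneg (by positivity) (hH0 _)
        · positivity
      refine b2.trans ?_
      have e1 : (A * Real.exp (|w| / ε₀)) *
          ((ε + 1 / 2) * (H (u - 1) * Real.exp ((1 - (w - u)) / ε))) =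
          (A * ((ε + 1 / 2) * H (u - 1))) * Real.exp (|w| / ε₀ + (1 - (w - u)) / ε) := by
        rw [Real.exp_add]; ring
      rw [e1, hC, mul_assoc _ (Real.exp _), ← Real.exp_add]
      refine mul_le_mul_of_nonneg_left ?_ (mul_nonneg hA (mul_nonneg (by positivity) (hH0 _)))
      rw [Real.exp_le_exp]
      have hw' : u < w := hw
      have a1 : |w| ≤ w + 2 * |u| := by
        rw [abs_le]; constructor
        · linarith [neg_abs_le u, abs_nonneg u]
        · linarith [abs_nonneg u]
      have a2 : |w| / ε₀ ≤ (w + 2 * |u|) / ε₀ := by gcongr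
      rw [hc]
      have : (1 + u) / ε + 2 * |u| / ε₀ + -(1 / ε - 1 / ε₀) * w =
        (w + 2 * |u|) / ε₀ + (1 - (w - u)) / ε := by ring
      rw [this]
      linarith
  refine ⟨hFi.integral_prod_left, ?_⟩
  have swap := integral_integral_swap hFi
  change 0 ≤ ∫ t, ∫ w, Fn t w ∂ν ∂μ
  rw [swap]
  refine setIntegral_nonneg measurableSet_Ioi fun w hw => ?_
  simp only [Fn]
  rw [integral_const_mul]
  refine mul_nonneg (hq0 w) ?_
  have c1 := crux_bmo hε h (w := w) (by have : u < w := hw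
                                        linarith)
  have : ∫ t, KK ε (φ t - w) ∂μ = ε * ∫ t, pp (φ t - w) ∂μ - (∫ t, pp (φ t - w) ^ 2 ∂μ) / 2 := by
    unfold KK
    rw [integral_sub ((pp_int h1 w).const_mul ε) ((pp_sq_int h1 h2 w).div_const 2),
      integral_const_mul, integral_div]
  rw [this]
  linarith

lemma D_ge {ε : ℝ} (hε : 0 < ε) {q : ℝ → ℝ} (hq0 : ∀ w, 0 ≤ q w) (u v : ℝ) :
    ∫ w in Ioi u, q w * KK ε (v - w) ≤ ∫ w in u..v, q w * (ε * (v - w) - (v - w) ^ 2 / 2) := by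
  rcases le_total u v with h | h
  · rw [intervalIntegral.integral_of_le h]
    apply le_of_eq
    rw [setIntegral_eq_of_subset_of_forall_sdiff_eq_zero measurableSet_Ioi
      (Ioc_subset_Ioi_self : Ioc u v ⊆ Ioi u)]
    · refine setIntegral_congr_fun measurableSet_Ioc fun w hw => ?_
      simp only [KK]
      rw [pp_of_nonneg (by linarith [hw.2])]
    · intro w hw
      have : v < w := by
        by_contra! hc
        exact hw.2 ⟨hw.1, hc⟩
      simp only [KK]
      rw [pp_of_nonpos (by linarith)]
      ring
  · rw [intervalIntegral.integral_symm, intervalIntegral.integral_of_le h]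
    have e : ∫ w in Ioi u, q w * KK ε (v - w) = 0 := by
      rw [← integral_zero ℝ ℝ (μ := volume.restrict (Ioi u))]
      refine setIntegral_congr_fun measurableSet_Ioi fun w hw => ?_
      have : u < w := hw
      simp only [KK]
      rw [pp_of_nonpos (by linarith)]
      ring
    rw [e, ← integral_neg]
    refine setIntegral_nonneg measurableSet_Ioc fun w hw => ?_
    have h1 : 0 ≤ w - v := by linarith [hw.1]
    have : -(q w * (ε * (v - w) - (v - w) ^ 2 / 2)) = q w * (ε * (w - v) + (w - v) ^ 2 / 2) := by
      ring
    rw [this]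
    have := hq0 w
    positivity

lemma D_rep {ε : ℝ} {f m p q : ℝ → ℝ} (hq : Continuous q)
    (hf : ∀ w, HasDerivAt f (m w - ε * p w) w) (hm : ∀ w, HasDerivAt m (p w) w)
    (hp : ∀ w, HasDerivAt p (q w) w) (u v : ℝ) :
    ∫ w in u..v, q w * (ε * (v - w) - (v - w) ^ 2 / 2) =
      f u + m u * (v - u) - p u * (ε * (v - u) - (v - u) ^ 2 / 2) - f v := by
  have hd : ∀ w ∈ uIcc u v, HasDerivAt
      (fun w => p w * (ε * (v - w) - (v - w) ^ 2 / 2) - m w * (v - w) - f w)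
      (q w * (ε * (v - w) - (v - w) ^ 2 / 2)) w := by
    intro w _
    have hvw : HasDerivAt (fun w : ℝ => v - w) (-1) w := by
      simpa using (hasDerivAt_id w).const_sub v
    have := (((hp w).mul ((hvw.const_mul ε).sub ((hvw.pow 2).div_const 2))).sub
      ((hm w).mul hvw)).sub (hf w)
    refine HasDerivAt.congr_deriv
      (f := fun w => p w * (ε * (v - w) - (v - w) ^ 2 / 2) - m w * (v - w) - f w) this ?_
    simp
    ring
  rw [intervalIntegral.integral_eq_sub_of_hasDerivAt hd]
  · simp
    ring
  · apply Continuous.intervalIntegrable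
    fun_prop

lemma W_facts {ε ε₀ : ℝ} (hε : 0 < ε) (hεε₀ : ε < ε₀) {f f3 : ℝ → ℝ} (hf : memWcl ε₀ f f3) :
    (∀ w, PT ε f w = f w + ε * PT ε (deriv f) w) ∧
    (∀ w, HasDerivAt f (PT ε (deriv f) w - ε * PT ε (deriv (deriv f)) w) w) ∧
    (∀ w, HasDerivAt (PT ε (deriv f)) (PT ε (deriv (deriv f)) w) w) ∧
    (∀ w, HasDerivAt (PT ε (deriv (deriv f))) (PT ε f3 w) w) ∧
    Continuous (PT ε f3) ∧
    ∃ A, ∀ w, PT ε f3 w ≤ A * Real.exp (|w| / ε₀) := by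
  obtain ⟨hC, h3, i0, i1, i2, i3⟩ := hf
  have hd0 : Differentiable ℝ f := hC.differentiable (by norm_num)
  have hC1 : ContDiff ℝ 1 (deriv f) := by
    have : ContDiff ℝ (1 + 1) f := by simpa [one_add_one_eq_two] using hC
    exact (contDiff_succ_iff_deriv.1 this).2.2
  have hd1 : Differentiable ℝ (deriv f) := hC1.differentiable (by norm_num)
  have hc2 : Continuous (deriv (deriv f)) := hC1.continuous_deriv (by norm_num)
  have hc1 : Continuous (deriv f) := hC1.continuous
  have k0 : ∀ x y : ℝ, x ≤ y → f y - f x = ∫ t in x..y, deriv f t := fun x y _ =>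
    (intervalIntegral.integral_deriv_eq_sub (fun t _ => hd0 t) (hc1.intervalIntegrable _ _)).symm
  have k1 : ∀ x y : ℝ, x ≤ y → deriv f y - deriv f x = ∫ t in x..y, deriv (deriv f) t :=
    fun x y _ => (intervalIntegral.integral_deriv_eq_sub (fun t _ => hd1 t)
      (hc2.intervalIntegrable _ _)).symm
  have P0 := PT_parts hε hεε₀ k0 i0 i1
  have P1 := PT_parts hε hεε₀ k1 i1 i2
  have P2 := PT_parts hε hεε₀ h3 i2 i3
  have D2 : ∀ w, HasDerivAt (PT ε (deriv (deriv f))) (PT ε f3 w) w := fun w =>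
    (PT_deriv hε hεε₀ hc2 i2 w).congr_deriv (by rw [P2 w]; field_simp; ring)
  refine ⟨P0, ?_, ?_, D2, ?_, ?_⟩
  · intro w
    refine (hd0 w).hasDerivAt.congr_deriv ?_
    rw [P1 w]; ring
  · exact fun w => (PT_deriv hε hεε₀ hc1 i1 w).congr_deriv (by rw [P1 w]; field_simp; ring)
  · have : PT ε f3 = fun w => (PT ε (deriv (deriv f)) w - deriv (deriv f) w) / ε := by
      funext w; rw [P2 w]; field_simp; ring
    rw [this]
    have : Continuous (PT ε (deriv (deriv f))) :=
      continuous_iff_continuousAt.2 fun w => (D2 w).continuousAt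
    fun_prop
  · refine ⟨ε⁻¹ * ∫ t, ‖f3 t * Real.exp (-|t| / ε₀)‖, fun w => ?_⟩
    have b := (Real.le_norm_self _).trans (PT_int hε hεε₀ i3 w).2
    unfold PT
    calc _ ≤ ε⁻¹ * Real.exp (w / ε) * ((∫ t, ‖f3 t * Real.exp (-|t| / ε₀)‖) *
          Real.exp (-(w / ε - |w| / ε₀))) := mul_le_mul_of_nonneg_left b (by positivity)
      _ = (ε⁻¹ * ∫ t, ‖f3 t * Real.exp (-|t| / ε₀)‖) *
          (Real.exp (w / ε) * Real.exp (-(w / ε - |w| / ε₀))) := by ring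
      _ = _ := by
        rw [← Real.exp_add]
        congr 2
        ring

lemma upper {ε ε₀ : ℝ} (hε : 0 < ε) (hεε₀ : ε < ε₀) {f f3 : ℝ → ℝ} (hf : memWcl ε₀ f f3)
    (hpos : ∀ u : ℝ, 0 ≤ ∫ t in Ici u, f3 t * Real.exp (-t / ε)) {x : ℝ × ℝ}
    (hx : x ∈ parabStrip ε) {φ : ℝ → ℝ} (h : memBMOe ε 0 1 φ)
    (hfi : IntegrableOn (fun t => f (φ t)) (Ioo 0 1))
    (hx1 : intAvg φ 0 1 = x.1) (hx2 : intAvg (fun t => (φ t) ^ 2) 0 1 = x.2) :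
    intAvg (fun t => f (φ t)) 0 1 ≤
      PT ε (deriv f) (uLpt ε x) * (x.1 - uLpt ε x) + f (uLpt ε x) := by
  obtain ⟨-, F1, F2, F3, F4, A, hA⟩ := W_facts hε hεε₀ hf
  set m := PT ε (deriv f)
  set p := PT ε (deriv (deriv f))
  set q := PT ε f3 with hqdef
  have hq0 : ∀ w, 0 ≤ q w := fun w => by
    rw [hqdef]; unfold PT
    exact mul_nonneg (by positivity) (hpos w)
  set u := uLpt ε x with hu
  set s := Real.sqrt (ε ^ 2 - (x.2 - x.1 ^ 2)) with hs
  have hs2 : s ^ 2 = ε ^ 2 - (x.2 - x.1 ^ 2) := Real.sq_sqrt (by linarith [hx.2])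
  have hs0 : 0 ≤ s := Real.sqrt_nonneg _
  have hus : u = x.1 - ε + s := rfl
  obtain ⟨I1, I2⟩ := upper_fubini hε hεε₀ F4 hq0 hA h (u := u) (by rw [hx1, hus]; linarith)
  have h1 := h.1
  have h2 := h.2.1
  have conv : ∀ g : ℝ → ℝ, intAvg g 0 1 = ∫ t in Ioo (0:ℝ) 1, g t := fun g => by
    rw [intAvg, intervalIntegral.integral_of_le zero_le_one, integral_Ioc_eq_integral_Ioo]; simp
  rw [conv] at hx1 hx2
  rw [conv]
  have hT : IntegrableOn (fun t => (p u / 2) * φ t ^ 2 + (m u - p u * ε - p u * u) * φ t +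
      (f u - m u * u + p u * ε * u + p u / 2 * u ^ 2)) (Ioo (0:ℝ) 1) :=
    ((h2.const_mul _).add (h1.const_mul _)).add (integrable_const _)
  have hT0 : IntegrableOn (fun t => (p u / 2) * φ t ^ 2 + (m u - p u * ε - p u * u) * φ t)
      (Ioo (0:ℝ) 1) := (h2.const_mul _).add (h1.const_mul _)
  have key : ∫ t in Ioo (0:ℝ) 1, ∫ w in Ioi u, q w * KK ε (φ t - w) ≤
      ∫ t in Ioo (0:ℝ) 1, (((p u / 2) * φ t ^ 2 + (m u - p u * ε - p u * u) * φ t +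
      (f u - m u * u + p u * ε * u + p u / 2 * u ^ 2)) - f (φ t)) := by
    refine integral_mono I1 (hT.sub hfi) fun t => ?_
    refine (D_ge hε hq0 u (φ t)).trans (le_of_eq ?_)
    rw [D_rep F4 F1 F2 F3]
    ring
  rw [integral_sub hT hfi, integral_add hT0
    (integrable_const _), integral_add (h2.const_mul _) (h1.const_mul _), integral_const_mul,
    integral_const_mul, hx1, hx2] at key
  simp only [integral_const, MeasurableSet.univ, measureReal_restrict_apply, univ_inter,
    Real.volume_real_Ioo, sub_zero, smul_eq_mul] at key
  have hmax : max (1:ℝ) 0 = 1 := by norm_num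
  rw [hmax] at key
  have hx2' : x.2 = ε ^ 2 - s ^ 2 + x.1 ^ 2 := by linarith
  have hx1' : x.1 = u + ε - s := by rw [hus]; ring
  have e : p u / 2 * x.2 + (m u - p u * ε - p u * u) * x.1 + 1 *
    (f u - m u * u + p u * ε * u + p u / 2 * u ^ 2) = m u * (x.1 - u) + f u := by
    rw [hx2', hx1']; ring
  rw [e] at key
  linarith

lemma cont_sq_log : ContinuousOn (fun t : ℝ => t * Real.log t ^ 2) (Ici 0) := by
  have h : Continuous fun t : ℝ => 4 * (Real.sqrt t * Real.log (Real.sqrt t)) ^ 2 :=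
    ((Real.continuous_mul_log.comp Real.continuous_sqrt).pow 2).const_mul 4
  refine h.continuousOn.congr fun t ht => ?_
  have h1 : Real.sqrt t ^ 2 = t := Real.sq_sqrt ht
  have h2 : Real.log (Real.sqrt t) = Real.log t / 2 := Real.log_sqrt ht
  simp only
  rw [h2, mul_pow, h1]
  ring

lemma log_sq_int (B : ℝ) {c d : ℝ} (hc : 0 ≤ c) (hcd : c ≤ d) :
    IntervalIntegrable (fun t => (B - Real.log t) ^ 2) volume c d ∧
    ∫ t in c..d, (B - Real.log t) ^ 2 =
      d * ((B - Real.log d + 1) ^ 2 + 1) - c * ((B - Real.log c + 1) ^ 2 + 1) := by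
  have hcont : ContinuousOn (fun t => t * ((B - Real.log t + 1) ^ 2 + 1)) (Icc c d) := by
    have e : (fun t => t * ((B - Real.log t + 1) ^ 2 + 1)) = fun t =>
        t * ((B + 1) ^ 2 + 1) - 2 * (B + 1) * (t * Real.log t) + t * Real.log t ^ 2 := by
      funext t; ring
    rw [e]
    refine ContinuousOn.add (Continuous.continuousOn ?_)
      (cont_sq_log.mono fun t ht => hc.trans ht.1)
    have := Real.continuous_mul_log
    fun_prop
  have hder : ∀ t ∈ Ioo c d, HasDerivAt (fun t => t * ((B - Real.log t + 1) ^ 2 + 1))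
      ((B - Real.log t) ^ 2) t := by
    intro t ht
    have ht0 : t ≠ 0 := (hc.trans_lt ht.1).ne'
    have h1 := (((((Real.hasDerivAt_log ht0).const_sub B).add_const 1).pow 2).add_const 1)
    have h2 := (hasDerivAt_id t).mul h1
    refine HasDerivAt.congr_deriv (f := fun t => t * ((B - Real.log t + 1) ^ 2 + 1)) h2 ?_
    simp
    field_simp
    ring
  have hi : IntervalIntegrable (fun t => (B - Real.log t) ^ 2) volume c d := by
    rw [intervalIntegrable_iff_integrableOn_Ioc_of_le hcd]
    exact intervalIntegral.integrableOn_deriv_of_nonneg hcont hder fun t _ => sq_nonneg _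
  exact ⟨hi, intervalIntegral.integral_eq_sub_of_hasDerivAt_of_le hcd hcont hder hi⟩

noncomputable def th (a t : ℝ) : ℝ := pp (Real.log a - Real.log t)

lemma th_left {a t : ℝ} (ht : 0 < t) (hta : t ≤ a) : th a t = Real.log a - Real.log t :=
  pp_of_nonneg (sub_nonneg.2 (Real.log_le_log ht hta))

lemma th_right {a t : ℝ} (ha : 0 < a) (hta : a ≤ t) : th a t = 0 :=
  pp_of_nonpos (sub_nonpos.2 (Real.log_le_log ha hta))

lemma th_meas (a : ℝ) : Measurable (th a) :=
  pp_cont.measurable.comp (measurable_const.sub Real.measurable_log)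

lemma th_int (a : ℝ) : IntegrableOn (th a) (Ioo (0:ℝ) 1) := by
  have h : IntervalIntegrable (fun t => Real.log a - Real.log t) volume 0 1 :=
    intervalIntegrable_const.sub intervalIntegral.intervalIntegrable_log'
  rw [intervalIntegrable_iff_integrableOn_Ioo_of_le zero_le_one] at h
  refine Integrable.mono h (th_meas a).aestronglyMeasurable (Filter.Eventually.of_forall fun t => ?_)
  simp only [Real.norm_eq_abs, th]
  rw [abs_of_nonneg (pp_nonneg _)]
  exact pp_le_abs _

lemma th_sq_int (a : ℝ) : IntegrableOn (fun t => th a t ^ 2) (Ioo (0:ℝ) 1) := by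
  have h := (log_sq_int (Real.log a) le_rfl zero_le_one).1
  rw [intervalIntegrable_iff_integrableOn_Ioo_of_le zero_le_one] at h
  refine Integrable.mono h ((th_meas a).pow_const 2).aestronglyMeasurable
    (Filter.Eventually.of_forall fun t => ?_)
  simp only [Real.norm_eq_abs, th]
  rw [abs_of_nonneg (sq_nonneg (pp (Real.log a - Real.log t))), abs_of_nonneg (sq_nonneg
    (Real.log a - Real.log t)), ← sq_abs (Real.log a - Real.log t)]
  exact pow_le_pow_left₀ (pp_nonneg _) (pp_le_abs _) 2

lemma ii_congr {g h : ℝ → ℝ} {c d : ℝ} (hcd : c ≤ d) (e : ∀ t ∈ Ioo c d, g t = h t) :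
    ∫ t in c..d, g t = ∫ t in c..d, h t := by
  rw [intervalIntegral.integral_of_le hcd, intervalIntegral.integral_of_le hcd,
    integral_Ioc_eq_integral_Ioo, integral_Ioc_eq_integral_Ioo]
  exact setIntegral_congr_fun measurableSet_Ioo e

lemma th_var_left {a c d : ℝ} (hc : 0 ≤ c) (hcd : c < d) (hda : d ≤ a) :
    ∫ t in c..d, (th a t - (th a d + 1)) ^ 2 ≤ d - c := by
  have hd : 0 < d := hc.trans_lt hcd
  rw [ii_congr hcd.le (h := fun t => ((Real.log d - 1) - Real.log t) ^ 2)]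
  · rw [(log_sq_int _ hc hcd.le).2]
    have : Real.log d - 1 - Real.log d + 1 = 0 := by ring
    rw [this]
    have : 0 ≤ c * (Real.log d - 1 - Real.log c + 1) ^ 2 := by positivity
    nlinarith
  · intro t ht
    rw [th_left (hc.trans_lt ht.1) (ht.2.le.trans hda), th_left hd hda]
    ring

lemma th_var_right {a c d : ℝ} (ha : 0 < a) (hcd : c ≤ d) (hac : a ≤ c) :
    ∫ t in c..d, (th a t - (th a d + 1)) ^ 2 = d - c := by
  rw [ii_congr hcd (h := fun t => 1)]
  · simp
  · intro t ht
    rw [th_right ha (hac.trans ht.1.le), th_right ha (hac.trans hcd)]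
    norm_num

lemma th_shift_ii (a K : ℝ) {c d : ℝ} (hc : 0 ≤ c) (hcd : c ≤ d) (hd : d ≤ 1) :
    IntervalIntegrable (fun t => (th a t - K) ^ 2) volume c d :=
  ii_sub (sq_sub_int (th_int a) (th_sq_int a) K) hc hcd hd

lemma th_var {a c d : ℝ} (ha : 0 < a) (hc : 0 ≤ c) (hcd : c < d) (hd : d ≤ 1) :
    ∫ t in c..d, (th a t - (th a d + 1)) ^ 2 ≤ d - c := by
  rcases le_total d a with h | h
  · exact th_var_left hc hcd h
  rcases le_or_gt a c with h' | h'
  · exact (th_var_right ha hcd.le h').le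
  have e : th a d = th a a := by rw [th_right ha h, th_right ha le_rfl]
  rw [← intervalIntegral.integral_add_adjacent_intervals
    (th_shift_ii a _ hc h'.le (h.trans hd)) (th_shift_ii a _ ha.le h hd)]
  have h1 := th_var_left hc h' (le_refl a)
  have h2 := th_var_right ha h (le_refl a)
  rw [← e] at h1
  linarith

lemma th_bmo {ε a u : ℝ} (ha : 0 < a) : memBMOe ε 0 1 (fun t => u + ε * th a t) := by
  have h1 : IntegrableOn (fun t => u + ε * th a t) (Ioo (0:ℝ) 1) :=
    (integrable_const u).add ((th_int a).const_mul ε)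
  have h2 : IntegrableOn (fun t => (u + ε * th a t) ^ 2) (Ioo (0:ℝ) 1) := by
    have : (fun t => (u + ε * th a t) ^ 2) = fun t =>
        u ^ 2 + ((2 * u * ε) * th a t + ε ^ 2 * th a t ^ 2) := by funext t; ring
    rw [this]
    exact (integrable_const _).add (((th_int a).const_mul _).add ((th_sq_int a).const_mul _))
  refine ⟨h1, h2, ?_⟩
  intro c d hc hcd hd
  have hdc : 0 < d - c := sub_pos.2 hcd
  have i1 := ii_sub h1 hc hcd.le hd
  have i2 := ii_sub h2 hc hcd.le hd
  set K := u + ε * (th a d + 1) with hK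
  have v := th_var ha hc hcd hd
  have e1 : ε ^ 2 * ∫ t in c..d, (th a t - (th a d + 1)) ^ 2 =
      (∫ t in c..d, (u + ε * th a t) ^ 2) - 2 * K * (∫ t in c..d, (u + ε * th a t))
        + (d - c) * K ^ 2 := by
    rw [← intervalIntegral.integral_const_mul, ← intervalIntegral.integral_const_mul,
      ← intervalIntegral.integral_sub i2 (i1.const_mul _)]
    have : (d - c) * K ^ 2 = ∫ t in c..d, K ^ 2 := by simp
    rw [this, ← intervalIntegral.integral_add (i2.sub (i1.const_mul _)) intervalIntegrable_const]
    congr 1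
    funext t
    rw [hK]
    ring
  have e2 : ε ^ 2 * ∫ t in c..d, (th a t - (th a d + 1)) ^ 2 ≤ ε ^ 2 * (d - c) :=
    mul_le_mul_of_nonneg_left v (sq_nonneg _)
  rw [e1] at e2
  simp only [intAvg]
  set X := ∫ t in c..d, (u + ε * th a t) ^ 2
  set Y := ∫ t in c..d, (u + ε * th a t)
  have e3 : X / (d - c) ≤ ε ^ 2 + 2 * K * (Y / (d - c)) - K ^ 2 := by
    rw [div_le_iff₀ hdc]
    have : (ε ^ 2 + 2 * K * (Y / (d - c)) - K ^ 2) * (d - c) =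
      ε ^ 2 * (d - c) + 2 * K * Y - (d - c) * K ^ 2 := by field_simp
    rw [this]; linarith
  nlinarith [sq_nonneg (Y / (d - c) - K)]

lemma th_avg {a : ℝ} (ha : 0 < a) (ha1 : a ≤ 1) :
    (∫ t in (0:ℝ)..1, th a t) = a ∧ (∫ t in (0:ℝ)..1, th a t ^ 2) = 2 * a := by
  constructor
  · rw [← intervalIntegral.integral_add_adjacent_intervals
      (ii_sub (th_int a) le_rfl ha.le ha1) (ii_sub (th_int a) ha.le ha1 le_rfl),
      ii_congr ha.le (fun t ht => th_left ht.1 ht.2.le),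
      ii_congr ha1 (fun t ht => th_right ha ht.1.le),
      intervalIntegral.integral_sub intervalIntegrable_const intervalIntegral.intervalIntegrable_log',
      integral_log]
    simp
  · rw [← intervalIntegral.integral_add_adjacent_intervals
      (ii_sub (th_sq_int a) le_rfl ha.le ha1) (ii_sub (th_sq_int a) ha.le ha1 le_rfl),
      ii_congr ha.le (h := fun t => (Real.log a - Real.log t) ^ 2)
        (fun t ht => by rw [th_left ht.1 ht.2.le]),
      ii_congr ha1 (h := fun t => 0) (fun t ht => by rw [th_right ha ht.1.le]; norm_num),
      (log_sq_int _ le_rfl ha.le).2]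
    simp
    ring

lemma th_f {ε a u : ℝ} (hε : 0 < ε) (ha : 0 < a) (ha1 : a ≤ 1) {f : ℝ → ℝ}
    (hf : IntegrableOn (fun t => f t * Real.exp (-t / ε)) (Ici u)) :
    IntegrableOn (fun t => f (u + ε * th a t)) (Ioo (0:ℝ) 1) ∧
    ∫ t in (0:ℝ)..1, f (u + ε * th a t) = a * PT ε f u + (1 - a) * f u := by
  set h : ℝ → ℝ := fun y => a * Real.exp (-(y - u) / ε) with hh
  set h' : ℝ → ℝ := fun y => a * (Real.exp (-(y - u) / ε) * (-1 / ε)) with hh'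
  have hder : ∀ y ∈ Ioi u, HasDerivWithinAt h (h' y) (Ioi u) y := by
    intro y _
    have : HasDerivAt (fun y : ℝ => -(y - u) / ε) (-1 / ε) y :=
      (((hasDerivAt_id y).sub_const u).neg).div_const ε
    exact (this.exp.const_mul a).hasDerivWithinAt
  have hlog : ∀ y, Real.log a - Real.log (h y) = (y - u) / ε := by
    intro y
    rw [hh]; simp only
    rw [Real.log_mul ha.ne' (Real.exp_pos _).ne', Real.log_exp]; ring
  have hinj : InjOn h (Ioi u) := by
    intro y _ z _ hyz
    have h1 := hlog y
    rw [hyz, hlog z] at h1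
    field_simp at h1
    linarith
  have himg : h '' Ioi u = Ioo 0 a := by
    ext t
    constructor
    · rintro ⟨y, hy, rfl⟩
      refine ⟨by positivity, ?_⟩
      have : Real.exp (-(y - u) / ε) < 1 := by
        rw [Real.exp_lt_one_iff]
        have : u < y := hy
        exact div_neg_of_neg_of_pos (by linarith) hε
      calc h y < a * 1 := mul_lt_mul_of_pos_left this ha
        _ = a := mul_one a
    · rintro ⟨ht0, hta⟩
      refine ⟨u + ε * (Real.log a - Real.log t), ?_, ?_⟩
      · have : Real.log t < Real.log a := Real.log_lt_log ht0 hta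
        have := mul_pos hε (sub_pos.2 this)
        simp only [mem_Ioi]; linarith
      · rw [hh]; simp only
        have : -(u + ε * (Real.log a - Real.log t) - u) / ε = Real.log t - Real.log a := by
          field_simp; ring
        rw [this, Real.exp_sub, Real.exp_log ht0, Real.exp_log ha]
        field_simp
  have e : ∀ y, |h' y| • f (u + ε * (Real.log a - Real.log (h y))) =
      (a * (ε⁻¹ * Real.exp (u / ε))) * (f y * Real.exp (-y / ε)) := by
    intro y
    rw [hlog]
    have e1 : u + ε * ((y - u) / ε) = y := by field_simp; ring
    have e2 : |h' y| = a * (Real.exp (-(y - u) / ε) * ε⁻¹) := by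
      rw [hh']; simp only
      rw [abs_mul, abs_mul, abs_of_pos ha, Real.abs_exp, abs_div, abs_neg, abs_one, abs_of_pos hε,
        one_div]
    have e3 : Real.exp (-(y - u) / ε) = Real.exp (u / ε) * Real.exp (-y / ε) := by
      rw [← Real.exp_add]; congr 1; ring
    rw [e1, e2, e3, smul_eq_mul]
    ring
  have hf' := hf.mono_set Ioi_subset_Ici_self
  have hint := integral_image_eq_integral_abs_deriv_smul measurableSet_Ioi hder hinj
    (fun t => f (u + ε * (Real.log a - Real.log t)))
  have hint2 := (integrableOn_image_iff_integrableOn_abs_deriv_smul measurableSet_Ioi hder hinj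
    (fun t => f (u + ε * (Real.log a - Real.log t))))
  rw [himg] at hint hint2
  simp only [e] at hint hint2
  rw [integral_const_mul] at hint
  have I1 : IntegrableOn (fun t => f (u + ε * th a t)) (Ioo 0 a) := by
    refine (hint2.2 (hf'.const_mul _)).congr_fun (fun t ht => ?_) measurableSet_Ioo
    simp only
    rw [th_left ht.1 ht.2.le]
  have I1' : IntervalIntegrable (fun t => f (u + ε * th a t)) volume 0 a := by
    rwa [intervalIntegrable_iff_integrableOn_Ioo_of_le ha.le]
  have I2' : IntervalIntegrable (fun t => f (u + ε * th a t)) volume a 1 := by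
    rw [intervalIntegrable_iff_integrableOn_Ioo_of_le ha1]
    refine (integrableOn_const (C := f u) (by simp)).congr_fun (fun t ht => ?_) measurableSet_Ioo
    simp only
    rw [th_right ha ht.1.le, mul_zero, add_zero]
  refine ⟨?_, ?_⟩
  · have := I1'.trans I2'
    rwa [intervalIntegrable_iff_integrableOn_Ioo_of_le zero_le_one] at this
  · rw [← intervalIntegral.integral_add_adjacent_intervals I1' I2',
      ii_congr ha.le (h := fun t => f (u + ε * (Real.log a - Real.log t)))
        (fun t ht => by rw [th_left ht.1 ht.2.le]),
      ii_congr ha1 (h := fun t => f u)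
        (fun t ht => by rw [th_right ha ht.1.le, mul_zero, add_zero]),
      intervalIntegral.integral_of_le ha.le, integral_Ioc_eq_integral_Ioo, hint]
    unfold PT
    rw [integral_Ici_eq_integral_Ioi]
    simp
    ring

theorem stmt10 (ε ε₀ : ℝ) (hε : 0 < ε) (hεε₀ : ε < ε₀) (f f3 : ℝ → ℝ)
    (hf : memWcl ε₀ f f3)
    (hpos : ∀ u : ℝ, 0 ≤ ∫ t in Ici u, f3 t * Real.exp (-t / ε)) :
    ∀ x ∈ parabStrip ε,
      bellmanFn ε f x.1 x.2 =
        (ε⁻¹ * Real.exp ((uLpt ε x) / ε) *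
            ∫ t in Ici (uLpt ε x), deriv f t * Real.exp (-t / ε)) *
          (x.1 - uLpt ε x) + f (uLpt ε x) := by
  intro x hx
  change bellmanFn ε f x.1 x.2 = PT ε (deriv f) (uLpt ε x) * (x.1 - uLpt ε x) + f (uLpt ε x)
  unfold bellmanFn
  apply IsGreatest.csSup_eq
  constructor
  swap
  · rintro y ⟨φ, h1, h2, h3, h4, rfl⟩
    exact upper hε hεε₀ hf hpos hx h1 h2 h3 h4
  set u := uLpt ε x with hu
  set s := Real.sqrt (ε ^ 2 - (x.2 - x.1 ^ 2)) with hs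
  have hs2 : s ^ 2 = ε ^ 2 - (x.2 - x.1 ^ 2) := Real.sq_sqrt (by linarith [hx.2])
  have hs0 : 0 ≤ s := Real.sqrt_nonneg _
  have hsε : s ≤ ε := by
    have := hx.1
    exact abs_le_of_sq_le_sq' (by linarith) hε.le |>.2
  have hus : u = x.1 - ε + s := rfl
  have hx2' : x.2 = ε ^ 2 - s ^ 2 + x.1 ^ 2 := by linarith
  have hx1' : x.1 = u + ε - s := by rw [hus]; ring
  rcases eq_or_lt_of_le hsε with h | h
  · have e1 : x.1 = u := by rw [hx1', h]; ring
    have e2 : x.2 = u ^ 2 := by rw [hx2', h, e1]; ring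
    rw [e1, e2]
    refine ⟨fun _ => u, ⟨?_, ?_, ?_⟩, ?_, ?_, ?_, ?_⟩
    · exact integrable_const _
    · exact integrable_const _
    · intro c d _ hcd _
      have : d - c ≠ 0 := (sub_pos.2 hcd).ne'
      simp only [intAvg, intervalIntegral.integral_const, smul_eq_mul]
      rw [mul_div_cancel_left₀ _ this, mul_div_cancel_left₀ _ this]
      nlinarith
    · exact integrable_const _
    · simp [intAvg]
    · simp [intAvg]
    · simp [intAvg]
  · set a := (ε - s) / ε with ha
    have ha0 : 0 < a := div_pos (by linarith) hε
    have ha1 : a ≤ 1 := by rw [ha, div_le_one hε]; linarith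
    have haε : ε * a = ε - s := by rw [ha]; field_simp
    obtain ⟨A1, A2⟩ := th_avg ha0 ha1
    obtain ⟨B1, B2⟩ := th_f hε ha0 ha1 (PT_int hε hεε₀ hf.2.2.1 u).1
    have j1 := ii_sub (th_int a) le_rfl zero_le_one le_rfl
    have j2 := ii_sub (th_sq_int a) le_rfl zero_le_one le_rfl
    refine ⟨fun t => u + ε * th a t, th_bmo ha0, B1, ?_, ?_, ?_⟩
    · simp only [intAvg]
      rw [intervalIntegral.integral_add intervalIntegrable_const (j1.const_mul ε),
        intervalIntegral.integral_const_mul, A1, hx1']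
      simp
      linarith
    · simp only [intAvg]
      have : (fun t => (u + ε * th a t) ^ 2) = fun t =>
        u ^ 2 + ((2 * u * ε) * th a t + ε ^ 2 * th a t ^ 2) := by funext t; ring
      rw [this, intervalIntegral.integral_add intervalIntegrable_const
        ((j1.const_mul _).add (j2.const_mul _)),
        intervalIntegral.integral_add (j1.const_mul _) (j2.const_mul _),
        intervalIntegral.integral_const_mul, intervalIntegral.integral_const_mul, A1, A2,
        hx2', hx1']
      simp
      have : s = ε - ε * a := by linarith
      rw [this]
      ring
    · simp only [intAvg]
      rw [B2, (W_facts hε hεε₀ hf).1 u]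
      have : x.1 - u = ε * a := by rw [haε, hx1']; ring
      rw [this]
      simp
      ring
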